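/- Bounded-difference property of the MMD difference statistic: define g(x^n, u^N, v^N) := MMD²(x^n, u^N) − MMD²(x^n, v^N) for x^n ∈ 𝓧^n, u^N, v^N ∈ 𝓧^N with n, N ≥ 2. Then replacing any single coordinate of x^n by an arbitrary element of 𝓧 changes the value of g by at most 8K₀/n in absolute value, and replacing any single coordinate of u^N or of v^N by an arbitrary element of 𝓧 changes the value of g by at most 8K₀/N in absolute value. -/

import Mathlib

open MeasureTheory

/-- Empirical (unbiased) squared MMD statistic between two finite samples. -/
noncomputable def mmd2emp {𝓧 : Type*} (k : 𝓧 → 𝓧 → ℝ) {n₁ n₂ : ℕ}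
    (x : Fin n₁ → 𝓧) (y : Fin n₂ → 𝓧) : ℝ :=
  (1 / ((n₁ : ℝ) * ((n₁ : ℝ) - 1))) *
      ∑ i : Fin n₁, ∑ j ∈ Finset.univ.filter (fun j => j ≠ i), k (x i) (x j)
    + (1 / ((n₂ : ℝ) * ((n₂ : ℝ) - 1))) *
      ∑ i : Fin n₂, ∑ j ∈ Finset.univ.filter (fun j => j ≠ i), k (y i) (y j)
    - (2 / ((n₁ : ℝ) * (n₂ : ℝ))) * ∑ i : Fin n₁, ∑ j : Fin n₂, k (x i) (y j)

/-- The MMD difference statistic `g(x,u,v) = MMD²(x,u) − MMD²(x,v)`. -/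
noncomputable def mmdDiff {𝓧 : Type*} (k : 𝓧 → 𝓧 → ℝ) {n N : ℕ}
    (x : Fin n → 𝓧) (u v : Fin N → 𝓧) : ℝ :=
  mmd2emp k x u - mmd2emp k x v

/-!
In `g(x, u, v)` the within-sample averages of `x` cancel, so `x` enters only through
`-2 (crossMean k x u - crossMean k x v)`. A single coordinate occurs in a fraction `1 / n` of the
pairs of a cross average and in a fraction `2 / n` of the off-diagonal pairs of a within-sample
average, always in exactly one of the two arguments of the kernel. If changing one argument moves
the kernel by at most `C`, then `g` moves by at most `2 (C / n + C / n)` when a point of `x` is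
replaced, and by at most `2 C / N + 2 C / N` when a point of `u` or `v` is replaced.
-/

theorem abs_sum_le_card_mul {ι R : Type*} [Ring R] [LinearOrder R] [IsOrderedRing R]
    {s : Finset ι} {f : ι → R} {C : R} (hf : ∀ i ∈ s, |f i| ≤ C) : |∑ i ∈ s, f i| ≤ s.card * C := by
  rw [← nsmul_eq_mul]
  exact (Finset.abs_sum_le_sum_abs f s).trans (Finset.sum_le_card_nsmul s _ C hf)

section KernelSums

variable {𝓧 𝓨 ι κ : Type*} [Fintype ι] [Fintype κ] [DecidableEq ι]

theorem sum_sum_ne_eq_of_eq_zero {M : Type*} [AddCommMonoid M] (d : ι → ι → M) (l : ι)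
    (hd : ∀ i j, i ≠ l → j ≠ l → d i j = 0) :
    ∑ i, ∑ j with j ≠ i, d i j = ∑ j with j ≠ l, d l j + ∑ i with i ≠ l, d i l := by
  have row_eq (i : ι) (hi : i ≠ l) : ∑ j with j ≠ i, d i j = d i l :=
    Finset.sum_eq_single_of_mem l (by simp [hi.symm]) fun j _ hj => hd i j hi hj
  rw [← Finset.add_sum_erase _ _ (Finset.mem_univ l), ← Finset.filter_ne']
  exact congrArg _ (Finset.sum_congr rfl fun i hi => row_eq i (Finset.mem_filter.1 hi).2)

variable {E : Type*} [AddCommGroup E]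

theorem sum_sum_ne_sub_update (k : 𝓧 → 𝓧 → E) (x : ι → 𝓧) (l : ι) (x' : 𝓧) :
    ∑ i, ∑ j with j ≠ i, k (x i) (x j) -
        ∑ i, ∑ j with j ≠ i, k (Function.update x l x' i) (Function.update x l x' j) =
      ∑ j with j ≠ l, (k (x l) (x j) - k x' (x j)) +
        ∑ i with i ≠ l, (k (x i) (x l) - k (x i) x') := by
  simp only [← Finset.sum_sub_distrib]
  rw [sum_sum_ne_eq_of_eq_zero _ l fun i j hi hj => by simp [hi, hj]]
  congr 1 <;> exact Finset.sum_congr rfl fun i hi => by simp [(Finset.mem_filter.1 hi).2]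

theorem sum_sum_sub_update_left (k : 𝓧 → 𝓨 → E) (x : ι → 𝓧) (y : κ → 𝓨) (l : ι) (x' : 𝓧) :
    ∑ i, ∑ j, k (x i) (y j) - ∑ i, ∑ j, k (Function.update x l x' i) (y j) =
      ∑ j, (k (x l) (y j) - k x' (y j)) := by
  simp only [← Finset.sum_sub_distrib]
  rw [Fintype.sum_eq_single l fun i hi => by simp [hi]]
  simp

variable {R : Type*} [Ring R] [LinearOrder R] [IsOrderedRing R] {C : R}

theorem abs_sum_sum_ne_sub_update_le {k : 𝓧 → 𝓧 → R}
    (hk_left : ∀ a a' b, |k a b - k a' b| ≤ C) (hk_right : ∀ a b b', |k a b - k a b'| ≤ C)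
    (x : ι → 𝓧) (l : ι) (x' : 𝓧) :
    |∑ i, ∑ j with j ≠ i, k (x i) (x j) -
        ∑ i, ∑ j with j ≠ i, k (Function.update x l x' i) (Function.update x l x' j)| ≤
      2 * ((Fintype.card ι - 1) * C) := by
  have card_ne : ((Finset.univ.filter (· ≠ l)).card : R) = Fintype.card ι - 1 := by
    rw [Finset.filter_ne', Finset.card_erase_of_mem (Finset.mem_univ l), Finset.card_univ,
      Nat.cast_pred (Fintype.card_pos_iff.2 ⟨l⟩)]
  rw [sum_sum_ne_sub_update, two_mul, ← card_ne]
  exact (abs_add_le _ _).trans (add_le_add (abs_sum_le_card_mul fun j _ => hk_left _ _ _)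
    (abs_sum_le_card_mul fun i _ => hk_right _ _ _))

theorem abs_sum_sum_sub_update_left_le {k : 𝓧 → 𝓨 → R} (hk : ∀ a a' b, |k a b - k a' b| ≤ C)
    (x : ι → 𝓧) (y : κ → 𝓨) (l : ι) (x' : 𝓧) :
    |∑ i, ∑ j, k (x i) (y j) - ∑ i, ∑ j, k (Function.update x l x' i) (y j)| ≤
      Fintype.card κ * C := by
  rw [sum_sum_sub_update_left]
  exact abs_sum_le_card_mul fun j _ => hk _ _ _

end KernelSums

section KernelMeans

variable {𝓧 𝓨 ι κ : Type*} [Fintype ι] [Fintype κ]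

/-- The average of a kernel over the ordered pairs of distinct indices of one sample, i.e. the
within-sample U-statistic of the MMD. It is `0` (by division by zero) for fewer than two points. -/
noncomputable def offDiagMean [DecidableEq ι] (k : 𝓧 → 𝓧 → ℝ) (x : ι → 𝓧) : ℝ :=
  (∑ i, ∑ j with j ≠ i, k (x i) (x j)) / (Fintype.card ι * (Fintype.card ι - 1))

/-- The average of a kernel over all pairs of points from two samples, i.e. the cross term of the
MMD. It is `0` (by division by zero) if a sample is empty. -/
noncomputable def crossMean (k : 𝓧 → 𝓨 → ℝ) (x : ι → 𝓧) (y : κ → 𝓨) : ℝ :=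
  (∑ i, ∑ j, k (x i) (y j)) / (Fintype.card ι * Fintype.card κ)

theorem crossMean_swap (k : 𝓧 → 𝓨 → ℝ) (x : ι → 𝓧) (y : κ → 𝓨) :
    crossMean (fun b a => k a b) y x = crossMean k x y := by
  rw [crossMean, crossMean, Finset.sum_comm, mul_comm]

variable [DecidableEq ι] {C : ℝ}

theorem abs_offDiagMean_sub_update_le [Nontrivial ι] {k : 𝓧 → 𝓧 → ℝ}
    (hk_left : ∀ a a' b, |k a b - k a' b| ≤ C) (hk_right : ∀ a b b', |k a b - k a b'| ≤ C)
    (x : ι → 𝓧) (l : ι) (x' : 𝓧) :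
    |offDiagMean k x - offDiagMean k (Function.update x l x')| ≤ 2 * C / Fintype.card ι := by
  have one_lt_card : (1 : ℝ) < Fintype.card ι := mod_cast Fintype.one_lt_card
  have card_sub_one_pos : (0 : ℝ) < Fintype.card ι - 1 := sub_pos.2 one_lt_card
  rw [offDiagMean, offDiagMean, ← sub_div, abs_div,
    abs_of_pos (a := (Fintype.card ι : ℝ) * _) (by positivity)]
  calc
    _ ≤ 2 * ((Fintype.card ι - 1) * C) / (Fintype.card ι * (Fintype.card ι - 1)) := by
      gcongr
      exact abs_sum_sum_ne_sub_update_le hk_left hk_right x l x'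
    _ = 2 * C / Fintype.card ι := by field_simp

theorem abs_crossMean_sub_update_left_le [Nonempty κ] {k : 𝓧 → 𝓨 → ℝ}
    (hk : ∀ a a' b, |k a b - k a' b| ≤ C) (x : ι → 𝓧) (y : κ → 𝓨) (l : ι) (x' : 𝓧) :
    |crossMean k x y - crossMean k (Function.update x l x') y| ≤ C / Fintype.card ι := by
  rw [crossMean, crossMean, ← sub_div, abs_div,
    abs_of_nonneg (a := (Fintype.card ι : ℝ) * _) (by positivity)]
  calc
    _ ≤ Fintype.card κ * C / (Fintype.card ι * Fintype.card κ) := by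
      gcongr
      exact abs_sum_sum_sub_update_left_le hk x y l x'
    _ = C / Fintype.card ι := by field_simp

theorem abs_crossMean_sub_update_right_le [Nonempty κ] {k : 𝓨 → 𝓧 → ℝ}
    (hk : ∀ a b b', |k a b - k a b'| ≤ C) (y : κ → 𝓨) (x : ι → 𝓧) (l : ι) (x' : 𝓧) :
    |crossMean k y x - crossMean k y (Function.update x l x')| ≤ C / Fintype.card ι := by
  rw [← crossMean_swap k, ← crossMean_swap k]
  exact abs_crossMean_sub_update_left_le (fun b b' a => hk a b b') x y l x'

end KernelMeans

section MMD

variable {𝓧 : Type*} {k : 𝓧 → 𝓧 → ℝ} {n N : ℕ}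

theorem mmd2emp_eq_offDiagMean_add_sub_crossMean (k : 𝓧 → 𝓧 → ℝ) (x : Fin n → 𝓧)
    (y : Fin N → 𝓧) :
    mmd2emp k x y = offDiagMean k x + offDiagMean k y - 2 * crossMean k x y := by
  simp only [mmd2emp, offDiagMean, crossMean, Fintype.card_fin]
  ring

theorem mmdDiff_eq_offDiagMean_sub_crossMean (k : 𝓧 → 𝓧 → ℝ) (x : Fin n → 𝓧)
    (u v : Fin N → 𝓧) :
    mmdDiff k x u v =
      offDiagMean k u - offDiagMean k v - 2 * (crossMean k x u - crossMean k x v) := by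
  simp only [mmdDiff, mmd2emp_eq_offDiagMean_add_sub_crossMean]
  ring

theorem mmdDiff_swap (k : 𝓧 → 𝓧 → ℝ) (x : Fin n → 𝓧) (u v : Fin N → 𝓧) :
    mmdDiff k x u v = -mmdDiff k x v u :=
  (neg_sub _ _).symm

variable {C : ℝ}

theorem abs_mmdDiff_sub_update_fst_le [NeZero N] (hk : ∀ a a' b, |k a b - k a' b| ≤ C)
    (x : Fin n → 𝓧) (u v : Fin N → 𝓧) (l : Fin n) (x' : 𝓧) :
    |mmdDiff k x u v - mmdDiff k (Function.update x l x') u v| ≤ 4 * C / n := by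
  have cross_le (w : Fin N → 𝓧) :
      |crossMean k x w - crossMean k (Function.update x l x') w| ≤ C / n := by
    simpa only [Fintype.card_fin] using abs_crossMean_sub_update_left_le hk x w l x'
  calc
    _ = 2 * |(crossMean k x u - crossMean k (Function.update x l x') u) -
          (crossMean k x v - crossMean k (Function.update x l x') v)| := by
      rw [mmdDiff_eq_offDiagMean_sub_crossMean, mmdDiff_eq_offDiagMean_sub_crossMean,
        sub_sub_sub_cancel_left, abs_sub_comm, ← mul_sub, abs_mul, abs_two, sub_sub_sub_comm]
    _ ≤ 2 * (C / n + C / n) := by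
      gcongr
      exact (abs_sub _ _).trans (add_le_add (cross_le u) (cross_le v))
    _ = 4 * C / n := by ring

theorem abs_mmdDiff_sub_update_snd_le [NeZero n] (hN : 2 ≤ N)
    (hk_left : ∀ a a' b, |k a b - k a' b| ≤ C) (hk_right : ∀ a b b', |k a b - k a b'| ≤ C)
    (x : Fin n → 𝓧) (u v : Fin N → 𝓧) (l : Fin N) (u' : 𝓧) :
    |mmdDiff k x u v - mmdDiff k x (Function.update u l u') v| ≤ 4 * C / N := by
  have : Nontrivial (Fin N) := Fin.nontrivial_iff_two_le.2 hN
  have offDiag_le :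
      |offDiagMean k u - offDiagMean k (Function.update u l u')| ≤ 2 * C / N := by
    simpa only [Fintype.card_fin] using abs_offDiagMean_sub_update_le hk_left hk_right u l u'
  have cross_le :
      |crossMean k x u - crossMean k x (Function.update u l u')| ≤ C / N := by
    simpa only [Fintype.card_fin] using abs_crossMean_sub_update_right_le hk_right x u l u'
  calc
    _ = |(offDiagMean k u - offDiagMean k (Function.update u l u')) -
          2 * (crossMean k x u - crossMean k x (Function.update u l u'))| := by
      rw [mmdDiff_eq_offDiagMean_sub_crossMean, mmdDiff_eq_offDiagMean_sub_crossMean]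
      congr 1
      ring
    _ ≤ 2 * C / N + 2 * (C / N) := by
      refine (abs_sub _ _).trans (add_le_add offDiag_le ?_)
      rw [abs_mul, abs_two]
      gcongr
    _ = 4 * C / N := by ring

theorem abs_mmdDiff_sub_update_thd_le [NeZero n] (hN : 2 ≤ N)
    (hk_left : ∀ a a' b, |k a b - k a' b| ≤ C) (hk_right : ∀ a b b', |k a b - k a b'| ≤ C)
    (x : Fin n → 𝓧) (u v : Fin N → 𝓧) (l : Fin N) (v' : 𝓧) :
    |mmdDiff k x u v - mmdDiff k x u (Function.update v l v')| ≤ 4 * C / N := by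
  rw [mmdDiff_swap k x u v, mmdDiff_swap k x u, neg_sub_neg, abs_sub_comm]
  exact abs_mmdDiff_sub_update_snd_le hN hk_left hk_right x v u l v'

theorem mmdDiff_bounded_differences_general (hk_left : ∀ a a' b, |k a b - k a' b| ≤ C)
    (hk_right : ∀ a b b', |k a b - k a b'| ≤ C) (hn : 2 ≤ n) (hN : 2 ≤ N)
    (x : Fin n → 𝓧) (u v : Fin N → 𝓧) :
    (∀ (l : Fin n) (x' : 𝓧),
      |mmdDiff k x u v - mmdDiff k (Function.update x l x') u v| ≤ 4 * C / n) ∧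
    (∀ (l : Fin N) (u' : 𝓧),
      |mmdDiff k x u v - mmdDiff k x (Function.update u l u') v| ≤ 4 * C / N) ∧
    (∀ (l : Fin N) (v' : 𝓧),
      |mmdDiff k x u v - mmdDiff k x u (Function.update v l v')| ≤ 4 * C / N) :=
  have : NeZero n := ⟨by lia⟩
  have : NeZero N := ⟨by lia⟩
  ⟨abs_mmdDiff_sub_update_fst_le hk_left x u v,
    abs_mmdDiff_sub_update_snd_le hN hk_left hk_right x u v,
    abs_mmdDiff_sub_update_thd_le hN hk_left hk_right x u v⟩

end MMD

/-- Bounded-difference property of the MMD difference statistic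
`g(x,u,v) = MMD²(x,u) − MMD²(x,v)`: replacing one coordinate of `x` changes the value by at
most `8 K₀ / n`, and replacing one coordinate of `u` or of `v` changes the value by at most
`8 K₀ / N`. -/
theorem mmdDiff_bounded_differences
    {𝓧 : Type*} [MeasurableSpace 𝓧]
    (K₀ : ℝ) (hK₀ : 0 < K₀) (k : 𝓧 → 𝓧 → ℝ)
    (hk_meas : Measurable (Function.uncurry k))
    (hk_symm : ∀ x y, k x y = k y x)
    (hk_nonneg : ∀ x y, 0 ≤ k x y) (hk_bdd : ∀ x y, k x y ≤ K₀)
    {n N : ℕ} (hn : 2 ≤ n) (hN : 2 ≤ N)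
    (x : Fin n → 𝓧) (u v : Fin N → 𝓧) :
    (∀ (l : Fin n) (x' : 𝓧),
      |mmdDiff k x u v - mmdDiff k (Function.update x l x') u v| ≤ 8 * K₀ / n) ∧
    (∀ (l : Fin N) (u' : 𝓧),
      |mmdDiff k x u v - mmdDiff k x (Function.update u l u') v| ≤ 8 * K₀ / N) ∧
    (∀ (l : Fin N) (v' : 𝓧),
      |mmdDiff k x u v - mmdDiff k x u (Function.update v l v')| ≤ 8 * K₀ / N) := by
  have hk (a b c d) : |k a b - k c d| ≤ K₀ :=
    abs_sub_le_of_nonneg_of_le (hk_nonneg a b) (hk_bdd a b) (hk_nonneg c d) (hk_bdd c d)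
  have four_le_eight (m : ℕ) : 4 * K₀ / m ≤ 8 * K₀ / m := by gcongr; norm_num
  obtain ⟨hx, hu, hv⟩ := mmdDiff_bounded_differences_general
    (fun _ _ _ => hk ..) (fun _ _ _ => hk ..) hn hN x u v
  exact ⟨fun l x' => (hx l x').trans (four_le_eight n),
    fun l u' => (hu l u').trans (four_le_eight N), fun l v' => (hv l v').trans (four_le_eight N)⟩
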